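/- Let Γ be a terminal DG game and let v ∈ V_i be a non-terminal position with N⁺(v) ⊆ T, and let a ∈ N⁺(v) be the ≻_i-best element of N⁺(v). Let Γ' be the DG game obtained from Γ by deleting all moves (v,b) with b ∈ N⁺(v), b ≠ a. Then every terminal Nash equilibrium of Γ' is also a terminal Nash equilibrium of Γ. -/

import Mathlib

/-!
Deleting moves at `v` other than `(v, a)` changes neither the terminals nor the outcome function,
so only the set of situations shrinks: `Γ'`-situations are the `Γ`-situations choosing `a` at `v`.
Given a `Γ`-deviation `σ'` from a Nash equilibrium `σ` of `Γ'`, a deviation by a player other than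
`owner v` still chooses `a` at `v`, so it is already a deviation in `Γ'`. If `owner v` deviates,
redirect `σ'` at `v` to `a`. By `DGGame.outcome_update`, either the outcome is unchanged
(the play avoids `v`), or it changes from the terminal `σ' v` to the terminal `a`, which `owner v`
likes at least as much. So a profitable deviation in `Γ` would give a profitable one in `Γ'`.
-/

open Classical

/-- A deterministic graphical (DG) game on vertex (position) set `V` with player set `ι`.
`adj` is the move relation of the digraph; terminals are exactly the vertices of
out-degree `0`.  `owner x` is the player controlling position `x` (irrelevant for
terminals), `init` is the initial position, and `pref i x y` means that player `i`
strictly prefers outcome `x` to outcome `y`, where outcomes are encoded as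
`Option V`: `some t` for a terminal `t` and `none` for the infinite outcome `∞`. -/
structure DGGame (V : Type*) (ι : Type*) where
  adj : V → V → Prop
  owner : V → ι
  init : V
  pref : ι → Option V → Option V → Prop

namespace DGGame

variable {V ι : Type*} (Γ : DGGame V ι)

/-- A terminal position: no outgoing moves. -/
def Terminal (x : V) : Prop := ∀ y, ¬ Γ.adj x y

/-- The set of outcomes `A = T ∪ {∞}`. -/
def OutcomeSet : Set (Option V) := {x | x = none ∨ ∃ t, Γ.Terminal t ∧ x = some t}

/-- The preferences of each player form a strict linear order on the outcome set. -/
def PrefOrder : Prop :=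
  ∀ i : ι,
    (∀ x ∈ Γ.OutcomeSet, ¬ Γ.pref i x x) ∧
    (∀ x ∈ Γ.OutcomeSet, ∀ y ∈ Γ.OutcomeSet, ∀ z ∈ Γ.OutcomeSet,
        Γ.pref i x y → Γ.pref i y z → Γ.pref i x z) ∧
    (∀ x ∈ Γ.OutcomeSet, ∀ y ∈ Γ.OutcomeSet, x ≠ y → Γ.pref i x y ∨ Γ.pref i y x)

/-- One step of the play determined by a situation `σ` (stays put at terminals). -/
noncomputable def step (σ : V → V) (x : V) : V :=
  if Γ.Terminal x then x else σ x

/-- The position reached after `n` moves of the play starting at the initial position. -/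
noncomputable def iter (σ : V → V) (n : ℕ) : V := (Γ.step σ)^[n] Γ.init

/-- The outcome `g(σ)` of a situation: the terminal at which the play from the initial
position ends, or `none` (i.e. `∞`) if the play is infinite. -/
noncomputable def outcome (σ : V → V) : Option V :=
  if h : ∃ n, Γ.Terminal (Γ.iter σ n) then some (Γ.iter σ (Nat.find h)) else none

/-- A situation: a choice, for every non-terminal position, of a move from it.
(Values at terminal positions are irrelevant.) -/
def IsSituation (σ : V → V) : Prop := ∀ x, ¬ Γ.Terminal x → Γ.adj x (σ x)

/-- Nash equilibrium in pure stationary strategies: no player `i` can obtain a strictly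
better outcome by changing his own moves only. -/
def IsNE (σ : V → V) : Prop :=
  Γ.IsSituation σ ∧
  ∀ (i : ι) (σ' : V → V), Γ.IsSituation σ' →
    (∀ x, Γ.owner x ≠ i → σ' x = σ x) →
    ¬ Γ.pref i (Γ.outcome σ') (Γ.outcome σ)

/-- A terminal Nash equilibrium: a NE whose outcome is a terminal. -/
def IsTerminalNE (σ : V → V) : Prop := Γ.IsNE σ ∧ ∃ t, Γ.outcome σ = some t

/-- A non-terminal Nash equilibrium: a NE whose outcome is `∞`. -/
def IsNonterminalNE (σ : V → V) : Prop := Γ.IsNE σ ∧ Γ.outcome σ = none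

/-- A terminal DG game: every player prefers every terminal outcome to `∞`. -/
def TerminalGame : Prop := ∀ (i : ι) (t : V), Γ.Terminal t → Γ.pref i (some t) none

/-- A play-once DG game: every player controls exactly one position. -/
def PlayOnce : Prop := ∀ i : ι, {x | ¬ Γ.Terminal x ∧ Γ.owner x = i}.ncard = 1

/-- Reachability by a directed path. -/
def Reaches (x y : V) : Prop := Relation.ReflTransGen Γ.adj x y

end DGGame

namespace DGGame

variable {V ι : Type*} (Γ : DGGame V ι)

lemma iter_succ (σ : V → V) (n : ℕ) : Γ.iter σ (n + 1) = Γ.step σ (Γ.iter σ n) :=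
  Function.iterate_succ_apply' _ _ _

/-- The play stays put once it has reached a terminal. -/
lemma iter_eq_of_terminal {σ : V → V} {m n : ℕ} (hmn : m ≤ n) (h : Γ.Terminal (Γ.iter σ m)) :
    Γ.iter σ n = Γ.iter σ m := by
  induction n, hmn using Nat.le_induction with
  | base => rfl
  | succ k _ ih => rw [iter_succ, ih, step, if_pos h]

lemma outcome_eq_some {σ : V → V} {n : ℕ} (h : Γ.Terminal (Γ.iter σ n)) :
    Γ.outcome σ = some (Γ.iter σ n) := by
  have hex : ∃ n, Γ.Terminal (Γ.iter σ n) := ⟨n, h⟩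
  rw [outcome, dif_pos hex,
    Γ.iter_eq_of_terminal (Nat.find_min' hex h) (Nat.find_spec hex)]

lemma outcome_mem (σ : V → V) : Γ.outcome σ ∈ Γ.OutcomeSet := by
  by_cases h : ∃ n, Γ.Terminal (Γ.iter σ n)
  · obtain ⟨n, hn⟩ := h
    exact Or.inr ⟨_, hn, Γ.outcome_eq_some hn⟩
  · exact Or.inl (by rw [outcome, dif_neg h])

lemma outcome_congr {σ τ : V → V} (h : ∀ n, Γ.iter σ n = Γ.iter τ n) :
    Γ.outcome σ = Γ.outcome τ := by
  by_cases hex : ∃ n, Γ.Terminal (Γ.iter σ n)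
  · obtain ⟨n, hn⟩ := hex
    rw [Γ.outcome_eq_some hn, Γ.outcome_eq_some (h n ▸ hn), h n]
  · have hex' : ¬ ∃ n, Γ.Terminal (Γ.iter τ n) := by simpa only [h] using hex
    rw [outcome, outcome, dif_neg hex, dif_neg hex']

/-- Two situations that differ only at `v` produce the same play up to the first visit to `v`. -/
lemma iter_update {σ : V → V} {v a : V} {n : ℕ} (h : ∀ k < n, Γ.iter σ k ≠ v) :
    Γ.iter (Function.update σ v a) n = Γ.iter σ n := by
  induction n with
  | zero => rfl
  | succ n ih =>
    rw [iter_succ, iter_succ, ih fun k hk => h k (by omega), step, step,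
      Function.update_of_ne (h n (by omega))]

/-- If the moves `σ v` and `a` from `v` both lead to terminals, redirecting `σ` at `v` to `a` either
preserves the outcome (the play misses `v`) or changes it from `σ v` to `a`. -/
lemma outcome_update {σ : V → V} {v a : V} (hv : ¬ Γ.Terminal v)
    (hσ : Γ.Terminal (σ v)) (ha : Γ.Terminal a) :
    Γ.outcome (Function.update σ v a) = Γ.outcome σ ∨
      (Γ.outcome σ = some (σ v) ∧ Γ.outcome (Function.update σ v a) = some a) := by
  by_cases hex : ∃ n, Γ.iter σ n = v
  · right
    have hn := Nat.find_spec hex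
    have hτ := Γ.iter_update (a := a) fun k hk => Nat.find_min hex hk
    rw [hn] at hτ
    have h₁ : Γ.iter σ (Nat.find hex + 1) = σ v := by
      rw [iter_succ, hn, step, if_neg hv]
    have h₂ : Γ.iter (Function.update σ v a) (Nat.find hex + 1) = a := by
      rw [iter_succ, hτ, step, if_neg hv, Function.update_self]
    exact ⟨by rw [Γ.outcome_eq_some (h₁ ▸ hσ), h₁], by rw [Γ.outcome_eq_some (h₂ ▸ ha), h₂]⟩
  · left
    exact Γ.outcome_congr fun n => Γ.iter_update fun k _ hk => hex ⟨k, hk⟩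

end DGGame

/-- Let `Γ` be a terminal DG game, `v ∈ V_i` a non-terminal position all of whose
out-neighbours are terminals, and `a ∈ N⁺(v)` the `≻ᵢ`-best element of `N⁺(v)`.
Let `Γ'` be obtained from `Γ` by deleting all moves `(v,b)` with `b ∈ N⁺(v)`,
`b ≠ a`.  Then every terminal Nash equilibrium of `Γ'` is also a terminal
Nash equilibrium of `Γ`. -/
theorem stmt7 {V ι : Type*} [Finite V] (Γ : DGGame V ι)
    (hinit : ¬ Γ.Terminal Γ.init) (hpref : Γ.PrefOrder)
    (hterm : Γ.TerminalGame)
    (v : V) (i : ι) (hvi : Γ.owner v = i) (hvnt : ¬ Γ.Terminal v)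
    (hallT : ∀ u, Γ.adj v u → Γ.Terminal u)
    (a : V) (ha : Γ.adj v a)
    (hbest : ∀ b, Γ.adj v b → b ≠ a → Γ.pref i (some a) (some b))
    (Γ' : DGGame V ι)
    (hΓ' : Γ' = { Γ with adj := fun x y => Γ.adj x y ∧ (x = v → y = a) }) :
    ∀ σ : V → V, Γ'.IsTerminalNE σ → Γ.IsTerminalNE σ := by
  have hT : ∀ x, Γ'.Terminal x ↔ Γ.Terminal x := by
    subst hΓ'
    intro x
    refine ⟨fun h y hy => ?_, fun h y hy => h y hy.1⟩
    by_cases hx : x = v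
    · subst hx
      exact h a ⟨ha, fun _ => rfl⟩
    · exact h y ⟨hy, fun h => absurd h hx⟩
  have hstep : ∀ τ, Γ'.step τ = Γ.step τ := fun τ => by
    funext x
    simp only [DGGame.step, hT]
  have hiter : ∀ τ n, Γ'.iter τ n = Γ.iter τ n := fun τ n => by
    rw [DGGame.iter, DGGame.iter, hstep, hΓ']
  have hout : ∀ τ, Γ'.outcome τ = Γ.outcome τ := fun τ => by
    by_cases hex : ∃ n, Γ.Terminal (Γ.iter τ n)
    · obtain ⟨n, hn⟩ := hex
      have hn' : Γ'.Terminal (Γ'.iter τ n) := by rwa [hT, hiter]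
      rw [Γ.outcome_eq_some hn, Γ'.outcome_eq_some hn', hiter]
    · have hex' : ¬ ∃ n, Γ'.Terminal (Γ'.iter τ n) := by simpa only [hT, hiter] using hex
      rw [DGGame.outcome, DGGame.outcome, dif_neg hex, dif_neg hex']
  have hsit : ∀ τ, Γ'.IsSituation τ ↔ Γ.IsSituation τ ∧ τ v = a := fun τ => by
    simp only [DGGame.IsSituation, hT]
    subst hΓ'
    refine ⟨fun h => ⟨fun x hx => (h x hx).1, (h v hvnt).2 rfl⟩, fun h x hx => ⟨h.1 x hx, ?_⟩⟩
    rintro rfl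
    exact h.2
  have hown : Γ'.owner = Γ.owner := by rw [hΓ']
  have hpr : Γ'.pref = Γ.pref := by rw [hΓ']
  rintro σ ⟨⟨hσ, hne⟩, ht⟩
  simp only [hout, hown, hpr, hsit] at hσ hne ht
  refine ⟨⟨hσ.1, fun j σ' hσ' hdev hbetter => ?_⟩, ht⟩
  by_cases hj : Γ.owner v = j
  · obtain rfl : i = j := hvi.symm.trans hj
    have hτsit : Γ.IsSituation (Function.update σ' v a) := fun x hx => by
      by_cases hxv : x = v
      · subst hxv
        rwa [Function.update_self]
      · rw [Function.update_of_ne hxv]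
        exact hσ' x hx
    have hnot := hne i (Function.update σ' v a) ⟨hτsit, Function.update_self ..⟩ fun x hx => by
      rw [Function.update_of_ne (by rintro rfl; exact hx hvi)]
      exact hdev x hx
    have hadj := hσ' v hvnt
    rcases Γ.outcome_update hvnt (hallT _ hadj) (hallT _ ha) with h | ⟨h₁, h₂⟩
    · exact hnot (h ▸ hbetter)
    · rw [h₁] at hbetter
      rw [h₂] at hnot
      by_cases hb : σ' v = a
      · exact hnot (hb ▸ hbetter)
      · exact hnot ((hpref i).2.1 _ (Or.inr ⟨_, hallT _ ha, rfl⟩) _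
          (Or.inr ⟨_, hallT _ hadj, rfl⟩) _ (Γ.outcome_mem σ) (hbest _ hadj hb) hbetter)
  · exact hne j σ' ⟨hσ', (hdev v hj).trans hσ.2⟩ hdev hbetter
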